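/- arXiv:1202.1399 — 3 statements merged into one kernel-verified Lean document; each statement's English description precedes it below -/
import Mathlib

section
/- Assume in addition that b(x₀) ≠ 0 for some x₀ ∈ (B⁻¹, B). Then for every real number α, one has lim_{j→∞} ( K_{j,1}(α)/K_j(α) + j log B ) = − I₁(B,α)/I₀(B,α), the limit being taken along the positive integers j. -/
/-!
Put `N = B ^ j` and `u = l / N`. Since `l ^ (-α) = N ^ (-α) * u ^ (-α)` and
`log l = log u + log N`, both sums scale:
`K_j(α) = N ^ (-α) * A_j` and `K_{j,1}(α) = -N ^ (-α) * (L_j + log N * A_j)`, where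
`A_j = N⁻¹ ∑ b(u)² u^{-α} (2u + 1/N)` and `L_j` carries the additional factor `log u`.
As `log N = j log B`, the expression in the theorem is exactly `-(L_j / A_j)` once `A_j ≠ 0`.

The quantities `A_j` and `L_j` are Riemann sums of mesh `1/N` (up to the vanishing `1/N` term) for
continuous compactly supported functions, so they converge to `I₀` and `I₁`
(`tendsto_riemann_sum`, `tendsto_weighted_sum`). The hypothesis `b x₀ ≠ 0` gives `I₀ > 0`, hence the
quotient converges and `A_j ≠ 0` eventually.
-/

open Real Filter Topology

/-- `K_j(α) = B^{-2j} ∑_{l=1}^∞ b(l/B^j)² (2l+1) l^{-α}`. -/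
noncomputable def Kfun (B : ℝ) (b : ℝ → ℝ) (j : ℕ) (α : ℝ) : ℝ :=
  B ^ (-(2 * (j : ℝ))) *
    ∑' l : ℕ+, (b ((l : ℝ) / B ^ (j : ℕ))) ^ 2 * (2 * (l : ℝ) + 1) * (l : ℝ) ^ (-α)

/-- `K_{j,1}(α) = -B^{-2j} ∑_{l=1}^∞ b(l/B^j)² (2l+1) l^{-α} log l`. -/
noncomputable def Kfun1 (B : ℝ) (b : ℝ → ℝ) (j : ℕ) (α : ℝ) : ℝ :=
  -(B ^ (-(2 * (j : ℝ))) *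
    ∑' l : ℕ+, (b ((l : ℝ) / B ^ (j : ℕ))) ^ 2 * (2 * (l : ℝ) + 1) * (l : ℝ) ^ (-α) *
      Real.log (l : ℝ))

/-- `I₀(B,α) = 2 ∫_{B⁻¹}^B b(u)² u^{1-α} du`. -/
noncomputable def Ifun0 (B : ℝ) (b : ℝ → ℝ) (α : ℝ) : ℝ :=
  2 * ∫ u in B⁻¹..B, (b u) ^ 2 * u ^ (1 - α)

/-- `I₁(B,α) = 2 ∫_{B⁻¹}^B b(u)² u^{1-α} log u du`. -/
noncomputable def Ifun1 (B : ℝ) (b : ℝ → ℝ) (α : ℝ) : ℝ :=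
  2 * ∫ u in B⁻¹..B, (b u) ^ 2 * u ^ (1 - α) * Real.log u

/-- Riemann sums with an arbitrary real mesh `1 / N j → 0`. The error is at most the modulus of
continuity of `f` at `1 / N j` times the length of an interval containing the support. -/
lemma tendsto_riemann_sum {f : ℝ → ℝ} {a R : ℝ} (hf : Continuous f) (ha : 0 < a) (haR : a < R)
    (hs : Function.support f ⊆ Set.Ioo a R) {N : ℕ → ℝ} (hN : Tendsto N atTop atTop) :
    Tendsto (fun j => (N j)⁻¹ * ∑' l : ℕ+, f ((l : ℝ) / N j)) atTop (𝓝 (∫ u in a..R, f u)) := by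
  have hR : 0 < R := ha.trans haR
  have hcs : HasCompactSupport f :=
    HasCompactSupport.intro isCompact_Icc (K := Set.Icc a R) fun x hx => by
      by_contra h
      exact hx (Set.Ioo_subset_Icc_self (hs h))
  have huc := hcs.uniformContinuous_of_continuous hf
  rw [Metric.uniformContinuous_iff] at huc
  rw [Metric.tendsto_atTop]
  intro ε hε
  obtain ⟨δ, hδ, hd⟩ := huc (ε / (2 * (R + 1))) (by positivity)
  obtain ⟨j₀, hj₀⟩ := eventually_atTop.1
    ((hN.eventually_ge_atTop 1).and (hN.eventually_gt_atTop (1 / δ)))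
  refine ⟨j₀, fun j hj => ?_⟩
  obtain ⟨h1, h2⟩ := hj₀ j hj
  generalize N j = n at h1 h2
  have hn : 0 < n := by linarith
  have hnδ : 1 / n < δ := by
    rw [div_lt_iff₀ hδ] at h2
    rw [div_lt_iff₀ hn]; linarith
  set M : ℕ := ⌈R * n⌉₊ with hM
  have hM1 : R * n ≤ M := Nat.le_ceil _
  have hM2 : (M : ℝ) < R * n + 1 := Nat.ceil_lt_add_one (by positivity)
  have hRM : R ≤ M / n := by rwa [le_div_iff₀ hn]
  have hsum : ∑' l : ℕ+, f ((l : ℝ) / n) = ∑ k ∈ Finset.range M, f (((k + 1 : ℕ) : ℝ) / n) := by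
    rw [tsum_pnat_eq_tsum_succ (f := fun k : ℕ => f ((k : ℝ) / n))]
    apply tsum_eq_sum
    intro k hk
    by_contra h
    have hlt := (hs h).2
    rw [div_lt_iff₀ hn] at hlt
    have : M ≤ k := by simpa using hk
    have : (M : ℝ) ≤ k := by exact_mod_cast this
    push_cast at hlt
    linarith
  have hint : ∫ u in a..R, f u
      = ∑ k ∈ Finset.range M, ∫ u in ((k : ℕ) : ℝ) / n..((k + 1 : ℕ) : ℝ) / n, f u := by
    rw [intervalIntegral.sum_integral_adjacent_intervals
        (a := fun k : ℕ => (k : ℝ) / n) fun k _ => hf.intervalIntegrable _ _,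
      intervalIntegral.integral_eq_integral_of_support_subset
        (hs.trans Set.Ioo_subset_Ioc_self),
      intervalIntegral.integral_eq_integral_of_support_subset]
    intro x hx
    have := hs hx
    simp only [Nat.cast_zero, zero_div]
    exact ⟨ha.trans this.1, this.2.le.trans hRM⟩
  rw [hsum, hint, Finset.mul_sum, dist_eq_norm, ← Finset.sum_sub_distrib]
  have hterm : ∀ k ∈ Finset.range M, ‖n⁻¹ * f (((k + 1 : ℕ) : ℝ) / n)
      - ∫ u in ((k : ℕ) : ℝ) / n..((k + 1 : ℕ) : ℝ) / n, f u‖ ≤ ε / (2 * (R + 1)) * (1 / n) := by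
    intro k _
    have hlen : ((k + 1 : ℕ) : ℝ) / n - (k : ℝ) / n = 1 / n := by push_cast; ring
    have hc : n⁻¹ * f (((k + 1 : ℕ) : ℝ) / n)
        = ∫ _u in ((k : ℕ) : ℝ) / n..((k + 1 : ℕ) : ℝ) / n, f (((k + 1 : ℕ) : ℝ) / n) := by
      rw [intervalIntegral.integral_const, hlen, smul_eq_mul, one_div]
    rw [hc, ← intervalIntegral.integral_sub (by simp) (hf.intervalIntegrable _ _)]
    have hle : (k : ℝ) / n ≤ ((k + 1 : ℕ) : ℝ) / n := by
      have : 0 < 1 / n := by positivity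
      linarith
    refine (intervalIntegral.norm_integral_le_of_norm_le_const
      (C := ε / (2 * (R + 1))) fun x hx => ?_).trans_eq ?_
    · rw [Set.uIoc_of_le hle] at hx
      rw [← dist_eq_norm]
      refine (hd ?_).le
      rw [Real.dist_eq, abs_lt]
      constructor <;> linarith [hx.1, hx.2]
    · rw [hlen, abs_of_pos (by positivity)]
  refine (norm_sum_le_of_le _ hterm).trans_lt ?_
  rw [Finset.sum_const, Finset.card_range, nsmul_eq_mul]
  have hMn : (M : ℝ) * (1 / n) ≤ R + 1 := by
    rw [mul_one_div, div_le_iff₀ hn]; nlinarith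
  calc (M : ℝ) * (ε / (2 * (R + 1)) * (1 / n))
      = ε / (2 * (R + 1)) * (M * (1 / n)) := by ring
    _ ≤ ε / (2 * (R + 1)) * (R + 1) := by gcongr
    _ = ε / 2 := by field_simp
    _ < ε := by linarith

lemma summable_of_support_Ioo {f : ℝ → ℝ} {a R : ℝ} (hs : Function.support f ⊆ Set.Ioo a R)
    {n : ℝ} (hn : 0 < n) : Summable fun l : ℕ+ => f ((l : ℝ) / n) := by
  apply summable_of_hasFiniteSupport
  refine Set.Finite.subset (Set.finite_Iic (⌈R * n⌉₊.succPNat)) fun l hl => ?_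
  have hlt := (hs hl).2
  rw [div_lt_iff₀ hn] at hlt
  have h : (l : ℝ) ≤ (⌈R * n⌉₊ : ℕ) := hlt.le.trans (Nat.le_ceil _)
  have h' : (l : ℕ) ≤ ⌈R * n⌉₊ := by exact_mod_cast h
  rw [Set.mem_Iic, ← PNat.coe_le_coe, Nat.succPNat_coe]
  omega

/-- A weight that is only continuous on `(0, ∞)`, such as a power or a logarithm, becomes globally
continuous after multiplication by `b²`, because `b` vanishes near `(-∞, 0]`. -/
lemma continuous_sq_mul {b w : ℝ → ℝ} {a R : ℝ} (hb : Continuous b) (ha : 0 < a)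
    (hs : Function.support b ⊆ Set.Ioo a R) (hw : ContinuousOn w (Set.Ioi 0)) :
    Continuous fun u => b u ^ 2 * w u := by
  rw [continuous_iff_continuousAt]
  intro x
  rcases lt_or_ge 0 x with hx | hx
  · exact (hb.pow 2).continuousAt.mul (hw.continuousAt (Ioi_mem_nhds hx))
  · have h0 : (fun u => b u ^ 2 * w u) =ᶠ[𝓝 x] fun _ => 0 := by
      filter_upwards [Iio_mem_nhds (hx.trans_lt ha)] with u hu
      have : b u = 0 := by
        by_contra h
        exact absurd (hs h).1 (not_lt.2 (le_of_lt hu))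
      simp [this]
    exact continuousAt_const.congr h0.symm

/-- The Riemann sums with the factor `2u + 1/N`, which is `(2l + 1) / N` at `u = l / N`; its second
summand contributes `1/N` times a convergent sequence. -/
lemma tendsto_weighted_sum {b w : ℝ → ℝ} {a R : ℝ} (hb : Continuous b) (ha : 0 < a) (haR : a < R)
    (hs : Function.support b ⊆ Set.Ioo a R) (hw : ContinuousOn w (Set.Ioi 0))
    {N : ℕ → ℝ} (hN : Tendsto N atTop atTop) :
    Tendsto (fun j => (N j)⁻¹ * ∑' l : ℕ+,
        b ((l : ℝ) / N j) ^ 2 * w ((l : ℝ) / N j) * (2 * ((l : ℝ) / N j) + (N j)⁻¹))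
      atTop (𝓝 (2 * ∫ u in a..R, b u ^ 2 * (w u * u))) := by
  have hsub : ∀ v : ℝ → ℝ, Function.support (fun u => b u ^ 2 * v u) ⊆ Set.Ioo a R := by
    intro v x hx
    apply hs
    intro h
    simp [h] at hx
  have t1 := tendsto_riemann_sum (continuous_sq_mul hb ha hs (hw.mul continuousOn_id)) ha haR
    (hsub _) hN
  have t2 := tendsto_riemann_sum (continuous_sq_mul hb ha hs hw) ha haR (hsub _) hN
  have t3 := (t1.const_mul 2).add ((tendsto_inv_atTop_zero.comp hN).mul t2)
  rw [zero_mul, add_zero] at t3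
  refine t3.congr' ?_
  filter_upwards [hN.eventually_gt_atTop 0] with j hj
  have s1 := summable_of_support_Ioo (hsub (fun u => w u * u)) hj
  have s2 := summable_of_support_Ioo (hsub w) hj
  have : ∑' l : ℕ+, b ((l : ℝ) / N j) ^ 2 * w ((l : ℝ) / N j) * (2 * ((l : ℝ) / N j) + (N j)⁻¹)
      = 2 * ∑' l : ℕ+, b ((l : ℝ) / N j) ^ 2 * (w ((l : ℝ) / N j) * ((l : ℝ) / N j))
        + (N j)⁻¹ * ∑' l : ℕ+, b ((l : ℝ) / N j) ^ 2 * w ((l : ℝ) / N j) := by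
    rw [← tsum_mul_left, ← tsum_mul_left, ← (s1.mul_left 2).tsum_add (s2.mul_left _)]
    exact tsum_congr fun l => by ring
  rw [this]
  simp only [Function.comp, Pi.mul_apply, id]
  ring

theorem Kfun1_div_Kfun_limit (B : ℝ) (hB : 1 < B) (b : ℝ → ℝ) (hb : Continuous b)
    (hsupp : Function.support b ⊆ Set.Icc B⁻¹ B)
    (hne : ∃ x₀ ∈ Set.Ioo B⁻¹ B, b x₀ ≠ 0) (α : ℝ) :
    Tendsto (fun j : ℕ => Kfun1 B b j α / Kfun B b j α + (j : ℝ) * Real.log B)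
      atTop (𝓝 (-(Ifun1 B b α / Ifun0 B b α))) := by
  have hB0 : 0 < B := by linarith
  have ha : 0 < B⁻¹ := by positivity
  have haR : B⁻¹ < B := (inv_lt_one_of_one_lt₀ hB).trans hB
  -- The support is open, hence lies in the interior of `[B⁻¹, B]`.
  have hs : Function.support b ⊆ Set.Ioo B⁻¹ B := by
    rw [← interior_Icc]
    exact interior_maximal hsupp (hb.isOpen_support)
  have hN : Tendsto (fun j : ℕ => B ^ j) atTop atTop := tendsto_pow_atTop_atTop_of_one_lt hB
  have hw0 : ContinuousOn (fun u : ℝ => u ^ (-α)) (Set.Ioi 0) := fun x hx =>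
    (Real.continuousAt_rpow_const _ _ (Or.inl (ne_of_gt hx))).continuousWithinAt
  have hw1 : ContinuousOn (fun u : ℝ => u ^ (-α) * Real.log u) (Set.Ioi 0) :=
    hw0.mul (Real.continuousOn_log.mono fun x hx => ne_of_gt hx)
  have hpow : ∀ u ∈ Set.uIcc B⁻¹ B, u ^ (1 - α) = u ^ (-α) * u := by
    intro u hu
    rw [Set.uIcc_of_le haR.le] at hu
    rw [← Real.rpow_add_one (ha.trans_le hu.1).ne']
    congr 1; ring
  have hI0 : Ifun0 B b α = 2 * ∫ u in B⁻¹..B, b u ^ 2 * (u ^ (-α) * u) := by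
    unfold Ifun0
    congr 1
    exact intervalIntegral.integral_congr fun u hu => by simp only [hpow u hu]
  have hI1 : Ifun1 B b α
      = 2 * ∫ u in B⁻¹..B, b u ^ 2 * (u ^ (-α) * Real.log u * u) := by
    unfold Ifun1
    congr 1
    exact intervalIntegral.integral_congr fun u hu => by simp only [hpow u hu]; ring
  have hpos : 0 < Ifun0 B b α := by
    rw [hI0]
    obtain ⟨x₀, hx₀, hbx⟩ := hne
    refine mul_pos two_pos (intervalIntegral.integral_pos haR
      (continuous_sq_mul hb ha hs (hw0.mul continuousOn_id)).continuousOn ?_ ?_)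
    · intro x hx
      have : 0 < x := ha.trans hx.1
      positivity
    · refine ⟨x₀, Set.Ioo_subset_Icc_self hx₀, ?_⟩
      have : 0 < x₀ := ha.trans hx₀.1
      positivity
  have tA := tendsto_weighted_sum hb ha haR hs hw0 hN
  have tL := tendsto_weighted_sum hb ha haR hs hw1 hN
  rw [← hI0] at tA
  rw [← hI1] at tL
  refine (tL.div tA hpos.ne').neg.congr' ?_
  filter_upwards [tA.eventually_ne hpos.ne'] with j hA
  have hlog : Real.log (B ^ j) = j * Real.log B := Real.log_pow _ _
  have hpref : B ^ (-(2 * (j : ℝ))) = (B ^ j)⁻¹ * (B ^ j)⁻¹ := by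
    rw [Real.rpow_neg hB0.le, two_mul, Real.rpow_add hB0, Real.rpow_natCast, mul_inv]
  have hn : 0 < B ^ j := by positivity
  simp only [Pi.div_apply]
  unfold Kfun1 Kfun
  rw [hpref, ← hlog]
  generalize B ^ j = n at *
  have hsub : ∀ v : ℝ → ℝ, Function.support (fun u => b u ^ 2 * v u) ⊆ Set.Ioo B⁻¹ B := by
    intro v x hx
    apply hs
    intro h
    simp [h] at hx
  have hl : ∀ l : ℕ+, (2 * (l : ℝ) + 1) * (l : ℝ) ^ (-α)
      = n * n ^ (-α) * (((l : ℝ) / n) ^ (-α) * (2 * ((l : ℝ) / n) + n⁻¹)) := by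
    intro l
    rw [Real.div_rpow (by positivity) hn.le]
    have : n ^ (-α) ≠ 0 := (Real.rpow_pos_of_pos hn _).ne'
    field_simp
  have e0 : ∑' l : ℕ+, b ((l : ℝ) / n) ^ 2 * (2 * (l : ℝ) + 1) * (l : ℝ) ^ (-α)
      = n * n ^ (-α) * ∑' l : ℕ+,
        b ((l : ℝ) / n) ^ 2 * ((l : ℝ) / n) ^ (-α) * (2 * ((l : ℝ) / n) + n⁻¹) := by
    rw [← tsum_mul_left]
    refine tsum_congr fun l => ?_
    rw [mul_assoc, hl]; ring
  have s0 : Summable fun l : ℕ+ =>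
      b ((l : ℝ) / n) ^ 2 * ((l : ℝ) / n) ^ (-α) * (2 * ((l : ℝ) / n) + n⁻¹) :=
    (summable_of_support_Ioo (hsub fun u => u ^ (-α) * (2 * u + n⁻¹)) hn).congr
      fun l => by ring
  have s1 : Summable fun l : ℕ+ => b ((l : ℝ) / n) ^ 2 *
      (((l : ℝ) / n) ^ (-α) * Real.log ((l : ℝ) / n)) * (2 * ((l : ℝ) / n) + n⁻¹) :=
    (summable_of_support_Ioo
      (hsub fun u => u ^ (-α) * Real.log u * (2 * u + n⁻¹)) hn).congr fun l => by ring
  have e1 : ∑' l : ℕ+, b ((l : ℝ) / n) ^ 2 * (2 * (l : ℝ) + 1) * (l : ℝ) ^ (-α) * Real.log (l : ℝ)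
      = n * n ^ (-α) * ((∑' l : ℕ+, b ((l : ℝ) / n) ^ 2 *
          (((l : ℝ) / n) ^ (-α) * Real.log ((l : ℝ) / n)) * (2 * ((l : ℝ) / n) + n⁻¹))
        + Real.log n * ∑' l : ℕ+,
          b ((l : ℝ) / n) ^ 2 * ((l : ℝ) / n) ^ (-α) * (2 * ((l : ℝ) / n) + n⁻¹)) := by
    rw [← tsum_mul_left (a := Real.log n), ← s1.tsum_add (s0.mul_left _), ← tsum_mul_left]
    refine tsum_congr fun l => ?_
    have hlpos : (0 : ℝ) < l := by exact_mod_cast l.pos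
    have : Real.log (l : ℝ) = Real.log ((l : ℝ) / n) + Real.log n := by
      rw [Real.log_div hlpos.ne' hn.ne']; ring
    rw [mul_assoc (b _ ^ 2), hl, this]; ring
  rw [e0, e1]
  have hnα : n ^ (-α) ≠ 0 := (Real.rpow_pos_of_pos hn _).ne'
  have hA' := right_ne_zero_of_mul hA
  generalize (∑' l : ℕ+, b ((l : ℝ) / n) ^ 2 * ((l : ℝ) / n) ^ (-α) *
    (2 * ((l : ℝ) / n) + n⁻¹)) = A at *
  generalize (∑' l : ℕ+, b ((l : ℝ) / n) ^ 2 *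
    (((l : ℝ) / n) ^ (-α) * Real.log ((l : ℝ) / n)) * (2 * ((l : ℝ) / n) + n⁻¹)) = L at *
  field_simp
  ring
end

section
/- Assume in addition that b(x₀) ≠ 0 for some x₀ ∈ (B⁻¹, B). Then for every real number α, one has lim_{j→∞} ( 2 (K_{j,1}(α)/K_j(α))² − K_{j,2}(α)/K_j(α) − (j log B)² ) / (j log B) = 2 I₁(B,α)/I₀(B,α), the limit being taken along the positive integers j. -/
/-!
Put `N = B ^ j`, `L = log N = j log B`, `u = l / N`. Since `log l = L + log u`, all three sums are
combinations of the moments `T_k = N⁻² ∑ b(u)² (2l+1) u^{-α} (log u)^k`: up to the common factor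
`N^{-α}` one has `K_j = T₀`, `K_{j,1} = -(L T₀ + T₁)` and `K_{j,2} = L² T₀ + 2 L T₁ + T₂`
(`Kfun_eq`, `Kfun1_eq`, `Kfun2_eq`). With `ρ_k = T_k / T₀` the `L²` terms cancel, and the quantity of the theorem is
`2 ρ₁ + (2 ρ₁² - ρ₂) / L`.

Each `T_k` is a Riemann sum of mesh `1 / N`, up to an `O(1 / N)` term coming from the `1` in
`2l + 1`, so it converges to `2 ∫ b(u)² u^{1-α} (log u)^k du` (`tendsto_moment`). Hence `ρ₁ → I₁ / I₀`
and `ρ₂` stays bounded, where `I₀ > 0` because `b` does not vanish identically. No rate of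
convergence of the Riemann sums is needed.
-/

open Real Filter Topology

/-- `K_{j,2}(α) = B^{-2j} ∑_{l=1}^∞ b(l/B^j)² (2l+1) l^{-α} (log l)²`. -/
noncomputable def Kfun2 (B : ℝ) (b : ℝ → ℝ) (j : ℕ) (α : ℝ) : ℝ :=
  B ^ (-(2 * (j : ℝ))) *
    ∑' l : ℕ+, (b ((l : ℝ) / B ^ (j : ℕ))) ^ 2 * (2 * (l : ℝ) + 1) * (l : ℝ) ^ (-α) *
      Real.log (l : ℝ) ^ 2

/-! ### Riemann sums on the positive half-line -/

/-- The Riemann sum `N⁻¹ ∑_{l ≥ 1} g(l / N)` of mesh `1 / N` over the positive half-line. -/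
noncomputable def riemannSum (g : ℝ → ℝ) (N : ℝ) : ℝ :=
  N⁻¹ * ∑' l : ℕ+, g ((l : ℝ) / N)

lemma finite_support_sample {g : ℝ → ℝ} {c : ℝ} (h0 : ∀ x, c < x → g x = 0)
    {N : ℝ} (hN : 0 < N) : (Function.support fun l : ℕ+ => g ((l : ℝ) / N)).Finite := by
  refine (Set.finite_Iic (⟨⌈c * N⌉₊ + 1, Nat.succ_pos _⟩ : ℕ+)).subset fun l hl => ?_
  by_contra hlt
  refine hl (h0 _ ?_)
  rw [lt_div_iff₀ hN]
  have h1 : ⌈c * N⌉₊ + 1 < (l : ℕ) := by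
    exact PNat.coe_lt_coe _ _ |>.2 (not_le.1 hlt)
  have h2 : ((⌈c * N⌉₊ : ℕ) : ℝ) < (l : ℝ) := by exact_mod_cast (by omega : ⌈c * N⌉₊ < (l : ℕ))
  exact (Nat.le_ceil _).trans_lt h2

lemma summable_sample {g : ℝ → ℝ} {c : ℝ} (h0 : ∀ x, c < x → g x = 0)
    {N : ℝ} (hN : 0 < N) : Summable fun l : ℕ+ => g ((l : ℝ) / N) :=
  summable_of_hasFiniteSupport (finite_support_sample h0 hN)

/-- Comparison on each cell `[l/N, (l+1)/N]` by uniform continuity; at most `(c + 1) N` cells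
meet the support. -/
lemma tendsto_riemannSum {g : ℝ → ℝ} {a c : ℝ} (ha : 0 < a) (hac : a ≤ c) (hg : Continuous g)
    (h0 : ∀ x, x ∉ Set.Icc a c → g x = 0) :
    Tendsto (riemannSum g) atTop (𝓝 (∫ u in a..c, g u)) := by
  have huc : UniformContinuous g :=
    (HasCompactSupport.intro isCompact_Icc fun x hx => h0 x hx).uniformContinuous_of_continuous hg
  have hc : 0 < c := ha.trans_le hac
  rw [Metric.tendsto_nhds]
  intro ε hε
  obtain ⟨δ, hδ, hδg⟩ := Metric.uniformContinuous_iff.1 huc (ε / (c + 3)) (by positivity)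
  filter_upwards [eventually_gt_atTop (max 1 δ⁻¹)] with N hN
  have hN1 : 1 < N := (le_max_left _ _).trans_lt hN
  have hN0 : 0 < N := by linarith
  have hNδ : N⁻¹ < δ := inv_lt_of_inv_lt₀ hδ ((le_max_right _ _).trans_lt hN)
  set M : ℕ := ⌈c * N⌉₊ with hM
  have hMle : c * N ≤ M := Nat.le_ceil _
  have hMlt : (M : ℝ) < c * N + 1 := Nat.ceil_lt_add_one (by positivity)
  have hsum : riemannSum g N = ∑ l ∈ Finset.range M, N⁻¹ * g (((l + 1 : ℕ) : ℝ) / N) := by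
    rw [riemannSum, tsum_pnat_eq_tsum_succ (f := fun n : ℕ => g ((n : ℝ) / N)),
      tsum_eq_sum (s := Finset.range M), Finset.mul_sum]
    intro l hl
    refine h0 _ fun hx => ?_
    have h1 : M ≤ l := by simpa using hl
    have h2 : (M : ℝ) ≤ l := by exact_mod_cast h1
    have h3 := (div_le_iff₀ hN0).1 hx.2
    push_cast at h3
    linarith
  have hint : ∫ u in a..c, g u = ∫ u in (0 : ℝ)..(M : ℝ) / N, g u := by
    have e : ∀ p q : ℝ, p ≤ q → (Set.Icc a c ⊆ Set.Icc p q) → ∫ u in p..q, g u = ∫ u, g u := by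
      intro p q hpq hs
      rw [intervalIntegral.integral_of_le hpq, ← MeasureTheory.integral_Icc_eq_integral_Ioc]
      exact MeasureTheory.setIntegral_eq_integral_of_forall_compl_eq_zero
        fun x hx => h0 x fun h => hx (hs h)
    rw [e a c hac subset_rfl, e 0 _ (by positivity)]
    exact Set.Icc_subset_Icc ha.le ((le_div_iff₀ hN0).2 hMle)
  have hsplit : ∫ u in (0 : ℝ)..(M : ℝ) / N, g u =
      ∑ l ∈ Finset.range M, ∫ u in ((l : ℕ) : ℝ) / N..((l + 1 : ℕ) : ℝ) / N, g u := by
    rw [intervalIntegral.sum_integral_adjacent_intervals (a := fun l : ℕ => (l : ℝ) / N)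
      fun k _ => hg.intervalIntegrable _ _]
    simp
  rw [hint, hsplit, hsum, dist_eq_norm, ← Finset.sum_sub_distrib]
  have hcell : ∀ l ∈ Finset.range M, ‖N⁻¹ * g (((l + 1 : ℕ) : ℝ) / N) -
      ∫ u in ((l : ℕ) : ℝ) / N..((l + 1 : ℕ) : ℝ) / N, g u‖ ≤ ε / (c + 3) * N⁻¹ := by
    intro l _
    have hw : ((l + 1 : ℕ) : ℝ) / N - (l : ℝ) / N = N⁻¹ := by push_cast; field_simp; ring
    have hconst : N⁻¹ * g (((l + 1 : ℕ) : ℝ) / N) =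
        ∫ u in ((l : ℕ) : ℝ) / N..((l + 1 : ℕ) : ℝ) / N, g (((l + 1 : ℕ) : ℝ) / N) := by
      rw [intervalIntegral.integral_const, hw, smul_eq_mul]
    rw [hconst, ← intervalIntegral.integral_sub (by simp) (hg.intervalIntegrable _ _)]
    have hNi : 0 < N⁻¹ := by positivity
    refine (intervalIntegral.norm_integral_le_of_norm_le_const (C := ε / (c + 3)) ?_).trans ?_
    · intro x hx
      rw [Set.uIoc_of_le (by linarith)] at hx
      rw [← dist_eq_norm]
      refine (hδg ?_).le
      rw [Real.dist_eq, abs_of_nonneg (by linarith [hx.2])]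
      linarith [hx.1]
    · rw [hw, abs_of_pos hNi]
  refine (norm_sum_le_of_le _ hcell).trans_lt ?_
  rw [Finset.sum_const, Finset.card_range, nsmul_eq_mul]
  have h1 : (M : ℝ) * N⁻¹ < c + 3 := by
    rw [← div_eq_mul_inv, div_lt_iff₀ hN0]
    nlinarith
  calc (M : ℝ) * (ε / (c + 3) * N⁻¹) = (ε / (c + 3)) * (M * N⁻¹) := by ring
    _ < (ε / (c + 3)) * (c + 3) := by gcongr
    _ = ε := by field_simp

/-! ### Moments and the reduction of the `K` sums to them -/

/-- The integrand `u ↦ b(u)² u^p (log u)^k`. -/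
noncomputable def momentFun (b : ℝ → ℝ) (p : ℝ) (k : ℕ) (u : ℝ) : ℝ :=
  b u ^ 2 * u ^ p * Real.log u ^ k

section Moments

variable {B : ℝ} {b : ℝ → ℝ}

lemma momentFun_eq_zero (hsupp : Function.support b ⊆ Set.Icc B⁻¹ B) (p : ℝ) (k : ℕ) (x : ℝ)
    (hx : x ∉ Set.Icc B⁻¹ B) : momentFun b p k x = 0 := by
  have : b x = 0 := by
    by_contra h
    exact hx (hsupp h)
  simp [momentFun, this]

/-- The singularities of `u^p` and `log u` at `0` are harmless: `b` vanishes near `(-∞, 0]`. -/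
lemma continuous_momentFun (hB : 1 < B) (hb : Continuous b)
    (hsupp : Function.support b ⊆ Set.Icc B⁻¹ B) (p : ℝ) (k : ℕ) :
    Continuous (momentFun b p k) := by
  have hBi : 0 < B⁻¹ := by positivity
  rw [continuous_iff_continuousAt]
  intro x
  rcases lt_or_ge x B⁻¹ with hx | hx
  · refine (continuousAt_const (y := (0 : ℝ))).congr ?_
    filter_upwards [Iio_mem_nhds hx] with y hy
    exact (momentFun_eq_zero hsupp p k y fun h => absurd h.1 (not_le.2 hy)).symm
  · have hx0 : x ≠ 0 := (hBi.trans_le hx).ne'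
    exact ((hb.continuousAt.pow 2).mul (Real.continuousAt_rpow_const x p (Or.inl hx0))).mul
      ((Real.continuousAt_log hx0).pow k)

/-- The moment `T_k = N⁻² ∑_{l ≥ 1} b(u)² (2l+1) u^{-α} (log u)^k` with `u = l / N`, written as a
combination of Riemann sums by means of `2l + 1 = N (2u + 1/N)`. -/
noncomputable def moment (b : ℝ → ℝ) (α : ℝ) (k : ℕ) (N : ℝ) : ℝ :=
  2 * riemannSum (momentFun b (1 - α) k) N + N⁻¹ * riemannSum (momentFun b (-α) k) N

lemma tendsto_moment (hB : 1 < B) (hb : Continuous b)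
    (hsupp : Function.support b ⊆ Set.Icc B⁻¹ B) (α : ℝ) (k : ℕ) :
    Tendsto (moment b α k) atTop (𝓝 (2 * ∫ u in B⁻¹..B, momentFun b (1 - α) k u)) := by
  have hBi : 0 < B⁻¹ := by positivity
  have hle : B⁻¹ ≤ B := (inv_le_one_of_one_le₀ hB.le).trans hB.le
  have key : ∀ p, Tendsto (riemannSum (momentFun b p k)) atTop
      (𝓝 (∫ u in B⁻¹..B, momentFun b p k u)) := fun p =>
    tendsto_riemannSum hBi hle (continuous_momentFun hB hb hsupp p k)
      (momentFun_eq_zero hsupp p k)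
  have h := ((key (1 - α)).const_mul 2).add (tendsto_inv_atTop_zero.mul (key (-α)))
  rwa [zero_mul, add_zero] at h

lemma hasSum_moment (hsupp : Function.support b ⊆ Set.Icc B⁻¹ B) (α : ℝ) (k : ℕ) {N : ℝ}
    (hN : 0 < N) :
    HasSum (fun l : ℕ+ => b ((l : ℝ) / N) ^ 2 * (2 * (l : ℝ) + 1) * (l : ℝ) ^ (-α) *
      Real.log ((l : ℝ) / N) ^ k) (N ^ 2 * N ^ (-α) * moment b α k N) := by
  have hs : ∀ p, HasSum (fun l : ℕ+ => momentFun b p k ((l : ℝ) / N))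
      (N * riemannSum (momentFun b p k) N) := by
    intro p
    have h := (summable_sample (g := momentFun b p k) (c := B)
      (fun x hx => momentFun_eq_zero hsupp p k x fun h => absurd h.2 (not_le.2 hx)) hN).hasSum
    rwa [riemannSum, mul_inv_cancel_left₀ hN.ne']
  have h := ((hs (1 - α)).mul_left (2 * N * N ^ (-α))).add ((hs (-α)).mul_left (N ^ (-α)))
  have hval : N ^ 2 * N ^ (-α) * moment b α k N =
      2 * N * N ^ (-α) * (N * riemannSum (momentFun b (1 - α) k) N) +
        N ^ (-α) * (N * riemannSum (momentFun b (-α) k) N) := by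
    simp only [moment]
    field_simp
  rw [hval]
  refine Eq.mpr (congrArg (HasSum · _) (funext fun l => ?_)) h
  have hl : (0 : ℝ) < l := by exact_mod_cast l.pos
  have hu : 0 < (l : ℝ) / N := by positivity
  have e1 : (l : ℝ) ^ (-α) = N ^ (-α) * ((l : ℝ) / N) ^ (-α) := by
    rw [← Real.mul_rpow hN.le hu.le, mul_div_cancel₀ _ hN.ne']
  have e2 : ((l : ℝ) / N) ^ (1 - α) = (l : ℝ) / N * ((l : ℝ) / N) ^ (-α) := by
    rw [sub_eq_add_neg, Real.rpow_add hu, Real.rpow_one]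
  simp only [momentFun]
  rw [e1, e2]
  field_simp

lemma rpow_neg_two_mul (hB : 1 < B) (j : ℕ) :
    B ^ (-(2 * (j : ℝ))) * (B ^ j) ^ 2 = 1 := by
  have hB0 : 0 < B := by linarith
  rw [← pow_mul, ← Real.rpow_natCast, ← Real.rpow_add hB0]
  push_cast
  ring_nf
  simp

lemma Kfun_eq (hB : 1 < B) (hsupp : Function.support b ⊆ Set.Icc B⁻¹ B) (j : ℕ) (α : ℝ) :
    Kfun B b j α = (B ^ j) ^ (-α) * moment b α 0 (B ^ j) := by
  have hN : 0 < B ^ j := by positivity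
  have h := (hasSum_moment hsupp α 0 hN).tsum_eq
  simp only [pow_zero, mul_one] at h
  rw [Kfun, h]
  linear_combination ((B ^ j) ^ (-α) * moment b α 0 (B ^ j)) * rpow_neg_two_mul hB j

lemma log_eq_add (hB : 1 < B) (j : ℕ) (l : ℕ+) :
    Real.log (l : ℝ) = j * Real.log B + Real.log ((l : ℝ) / B ^ j) := by
  have hl : (l : ℝ) ≠ 0 := by exact_mod_cast l.pos.ne'
  have hN : B ^ j ≠ 0 := by positivity
  rw [Real.log_div hl hN, Real.log_pow]
  ring

lemma Kfun1_eq (hB : 1 < B) (hsupp : Function.support b ⊆ Set.Icc B⁻¹ B) (j : ℕ) (α : ℝ) :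
    Kfun1 B b j α = -((B ^ j) ^ (-α) *
      (j * Real.log B * moment b α 0 (B ^ j) + moment b α 1 (B ^ j))) := by
  have hN : 0 < B ^ j := by positivity
  have h := ((hasSum_moment hsupp α 0 hN).mul_left (j * Real.log B)).add
    (hasSum_moment hsupp α 1 hN)
  rw [Kfun1, tsum_congr fun l => ?_, h.tsum_eq]
  · linear_combination (-((B ^ j) ^ (-α) *
      (j * Real.log B * moment b α 0 (B ^ j) + moment b α 1 (B ^ j)))) * rpow_neg_two_mul hB j
  · rw [log_eq_add hB j l]
    ring

lemma Kfun2_eq (hB : 1 < B) (hsupp : Function.support b ⊆ Set.Icc B⁻¹ B) (j : ℕ) (α : ℝ) :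
    Kfun2 B b j α = (B ^ j) ^ (-α) *
      ((j * Real.log B) ^ 2 * moment b α 0 (B ^ j) +
        2 * (j * Real.log B) * moment b α 1 (B ^ j) + moment b α 2 (B ^ j)) := by
  have hN : 0 < B ^ j := by positivity
  have h := (((hasSum_moment hsupp α 0 hN).mul_left ((j * Real.log B) ^ 2)).add
    ((hasSum_moment hsupp α 1 hN).mul_left (2 * (j * Real.log B)))).add
    (hasSum_moment hsupp α 2 hN)
  rw [Kfun2, tsum_congr fun l => ?_, h.tsum_eq]
  · linear_combination ((B ^ j) ^ (-α) *
      ((j * Real.log B) ^ 2 * moment b α 0 (B ^ j) +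
        2 * (j * Real.log B) * moment b α 1 (B ^ j) + moment b α 2 (B ^ j))) *
      rpow_neg_two_mul hB j
  · rw [log_eq_add hB j l]
    ring

lemma Ifun0_pos (hB : 1 < B) (hb : Continuous b) (hsupp : Function.support b ⊆ Set.Icc B⁻¹ B)
    (hne : ∃ x₀ ∈ Set.Ioo B⁻¹ B, b x₀ ≠ 0) (α : ℝ) : 0 < Ifun0 B b α := by
  have hBi : 0 < B⁻¹ := by positivity
  obtain ⟨x₀, hx₀, hbx⟩ := hne
  have hc : Continuous fun u => b u ^ 2 * u ^ (1 - α) :=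
    (continuous_momentFun hB hb hsupp (1 - α) 0).congr fun u => by simp [momentFun]
  refine mul_pos two_pos (intervalIntegral.integral_pos (hx₀.1.trans hx₀.2) hc.continuousOn
    (fun x hx => ?_) ⟨x₀, Set.Ioo_subset_Icc_self hx₀, ?_⟩)
  · have : 0 < x := hBi.trans hx.1
    positivity
  · have : 0 < x₀ := hBi.trans hx₀.1
    positivity

end Moments

theorem Kfun_U2_second_order_limit (B : ℝ) (hB : 1 < B) (b : ℝ → ℝ) (hb : Continuous b)
    (hsupp : Function.support b ⊆ Set.Icc B⁻¹ B)
    (hne : ∃ x₀ ∈ Set.Ioo B⁻¹ B, b x₀ ≠ 0) (α : ℝ) :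
    Tendsto (fun j : ℕ =>
      (2 * (Kfun1 B b j α / Kfun B b j α) ^ 2 - Kfun2 B b j α / Kfun B b j α -
          ((j : ℝ) * Real.log B) ^ 2) / ((j : ℝ) * Real.log B))
      atTop (𝓝 (2 * Ifun1 B b α / Ifun0 B b α)) := by
  have hlogB : 0 < Real.log B := Real.log_pos hB
  have hN : Tendsto (fun j : ℕ => B ^ j) atTop atTop := tendsto_pow_atTop_atTop_of_one_lt hB
  have hL : Tendsto (fun j : ℕ => (j : ℝ) * Real.log B) atTop atTop :=
    tendsto_natCast_atTop_atTop.atTop_mul_const hlogB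
  have hI0 := Ifun0_pos hB hb hsupp hne α
  have hT0 : Tendsto (fun j : ℕ => moment b α 0 (B ^ j)) atTop (𝓝 (Ifun0 B b α)) := by
    simpa [Ifun0, momentFun, Function.comp_def] using (tendsto_moment hB hb hsupp α 0).comp hN
  have hT1 : Tendsto (fun j : ℕ => moment b α 1 (B ^ j)) atTop (𝓝 (Ifun1 B b α)) := by
    simpa [Ifun1, momentFun, Function.comp_def] using (tendsto_moment hB hb hsupp α 1).comp hN
  have hT2 := (tendsto_moment hB hb hsupp α 2).comp hN
  have hR1 := hT1.div hT0 hI0.ne'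
  have hR2 := hT2.div hT0 hI0.ne'
  simp only [Pi.div_def, Function.comp_apply] at hR1 hR2
  have hmain := (hR1.const_mul 2).add ((((hR1.pow 2).const_mul 2).sub hR2).div_atTop hL)
  rw [add_zero, ← mul_div_assoc] at hmain
  refine hmain.congr' ?_
  -- Both junk divisions, by `T₀ = 0` and by `L = 0` (at `j = 0`), are excluded eventually.
  filter_upwards [hT0.eventually_ne hI0.ne', hL.eventually_gt_atTop 0] with j h0 hLj
  have hP : (B ^ j : ℝ) ^ (-α) ≠ 0 := by positivity
  rw [Kfun_eq hB hsupp, Kfun1_eq hB hsupp, Kfun2_eq hB hsupp, ← mul_neg,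
    mul_div_mul_left _ _ hP, mul_div_mul_left _ _ hP]
  generalize (j : ℝ) * Real.log B = L at hLj ⊢
  have hL0 : L ≠ 0 := hLj.ne'
  field_simp
  ring
end

section
/- Assume b(x) > 0 for every x ∈ (B⁻¹, B), fix real numbers α and α₀ with α₀ − α = 2, and assume K_j(α) > 0 and K_j(α₀) > 0 for every integer j ≥ 1. Then lim_{J→∞} (1/log J) · [ log( (∑_{j=1}^{J} B^{2j} · K_j(α₀)/K_j(α)) / (∑_{j=1}^{J} B^{2j}) ) − (∑_{j=1}^{J} B^{2j} · log( K_j(α₀)/K_j(α) )) / (∑_{j=1}^{J} B^{2j}) ] = 1, the limit being taken as the integer J tends to infinity. -/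
/-!
On the support of `b (· / B ^ j)` one has `B ^ (j - 1) ≤ l ≤ B ^ (j + 1)`, so replacing `l ^ (-α)` by
`l ^ (-α₀) = l ^ (-α) * l ^ (-2)` changes each summand by a factor between `B ^ (-2 * (j + 1))` and
`B ^ (-2 * (j - 1))`. With `q = B ^ 2` and `r j = K_j(α₀) / K_j(α)` this gives
`q⁻¹ ≤ q ^ j * r j ≤ q` (`Kfun_ratio_bounds`). Only this bound, not the exact asymptotics of `r j`,
is needed.

Put `D J = ∑_{j ≤ J} q ^ j`. The sum `∑ q ^ j * r j` is comparable to `J`, so its logarithm is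
`log J + O(1)`. Geometric sums give `log (D J) = J * log q + O(1)`, while
`∑ q ^ j * log (r j) / D J = -log q * ∑ j * q ^ j / D J + O(1) = -J * log q + O(1)`, because
`∑ (J - j) * q ^ j = O(q ^ J)`. The terms `J * log q` cancel, so the bracket is `log J + O(1)`
(`bracket_sub_log_bounded`).
-/

open Real Filter Topology

/-- A summand at `α₀` is the one at `α` times `l ^ (-2)`, and `(l / B ^ j) ^ 2` lies in
`[B ^ (-2), B ^ 2]` wherever the summand is nonzero. -/
lemma Kfun_ratio_bounds (B : ℝ) (hB : 1 < B) (b : ℝ → ℝ)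
    (hsupp : Function.support b ⊆ Set.Icc B⁻¹ B)
    (α α₀ : ℝ) (hdiff : α₀ - α = 2) (j : ℕ)
    (hK : 0 < Kfun B b j α) (hK0 : 0 < Kfun B b j α₀) :
    (B ^ 2)⁻¹ ≤ (B ^ 2) ^ j * (Kfun B b j α₀ / Kfun B b j α) ∧
      (B ^ 2) ^ j * (Kfun B b j α₀ / Kfun B b j α) ≤ B ^ 2 := by
  have hB0 : 0 < B := by linarith
  -- A positive `Kfun` forces summability, since a divergent `tsum` is `0`.
  have hs : ∀ β : ℝ, 0 < Kfun B b j β → Summable fun l : ℕ+ =>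
      (b ((l : ℝ) / B ^ (j : ℕ))) ^ 2 * (2 * (l : ℝ) + 1) * (l : ℝ) ^ (-β) := by
    intro β h
    by_contra hn
    rw [Kfun, tsum_eq_zero_of_not_summable hn] at h
    simp at h
  have hterm : ∀ l : ℕ+,
      (B ^ 2)⁻¹ * ((b ((l : ℝ) / B ^ (j : ℕ))) ^ 2 * (2 * (l : ℝ) + 1) * (l : ℝ) ^ (-α)) ≤
        (B ^ 2) ^ j * ((b ((l : ℝ) / B ^ (j : ℕ))) ^ 2 * (2 * (l : ℝ) + 1) * (l : ℝ) ^ (-α₀)) ∧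
      (B ^ 2) ^ j * ((b ((l : ℝ) / B ^ (j : ℕ))) ^ 2 * (2 * (l : ℝ) + 1) * (l : ℝ) ^ (-α₀)) ≤
        B ^ 2 * ((b ((l : ℝ) / B ^ (j : ℕ))) ^ 2 * (2 * (l : ℝ) + 1) * (l : ℝ) ^ (-α)) := by
    intro l
    by_cases hz : b ((l : ℝ) / B ^ (j : ℕ)) = 0
    · simp [hz]
    have hl : (0 : ℝ) < l := by exact_mod_cast l.pos
    obtain ⟨h1, h2⟩ := hsupp (Function.mem_support.mpr hz)
    have hP : 0 < B ^ j := by positivity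
    have hx : 0 < (l : ℝ) / B ^ j := by positivity
    have hpow : (l : ℝ) ^ (-α₀) = (l : ℝ) ^ (-α) * ((l : ℝ) ^ 2)⁻¹ := by
      rw [show -α₀ = -α + -(2 : ℝ) by linarith, Real.rpow_add hl, Real.rpow_neg hl.le 2]
      norm_cast
    have hA : 0 ≤ (b ((l : ℝ) / B ^ (j : ℕ))) ^ 2 * (2 * (l : ℝ) + 1) * (l : ℝ) ^ (-α) := by
      positivity
    have hre : (B ^ 2) ^ j *
        ((b ((l : ℝ) / B ^ (j : ℕ))) ^ 2 * (2 * (l : ℝ) + 1) * (l : ℝ) ^ (-α₀)) =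
        ((l : ℝ) / B ^ j)⁻¹ ^ 2 *
        ((b ((l : ℝ) / B ^ (j : ℕ))) ^ 2 * (2 * (l : ℝ) + 1) * (l : ℝ) ^ (-α)) := by
      rw [hpow, ← pow_mul, mul_comm 2 j, pow_mul, inv_div, div_pow, div_eq_mul_inv]
      ring
    rw [hre]
    constructor
    · refine mul_le_mul_of_nonneg_right ?_ hA
      rw [← inv_pow]
      gcongr
    · refine mul_le_mul_of_nonneg_right ?_ hA
      have : ((l : ℝ) / B ^ j)⁻¹ ≤ B := inv_le_of_inv_le₀ hB0 h1
      gcongr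
  have hp : 0 < B ^ (-(2 * (j : ℝ))) := by positivity
  rw [← mul_div_assoc, le_div_iff₀ hK, div_le_iff₀ hK]
  have e1 := ((hs α hK).mul_left (B ^ 2)⁻¹).tsum_le_tsum (fun l => (hterm l).1)
    ((hs α₀ hK0).mul_left ((B ^ 2) ^ j))
  have e2 := ((hs α₀ hK0).mul_left ((B ^ 2) ^ j)).tsum_le_tsum (fun l => (hterm l).2)
    ((hs α hK).mul_left (B ^ 2))
  rw [tsum_mul_left, tsum_mul_left] at e1 e2
  have f1 := mul_le_mul_of_nonneg_left e1 hp.le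
  have f2 := mul_le_mul_of_nonneg_left e2 hp.le
  unfold Kfun
  constructor <;> linarith

lemma geom_sum_le (q : ℝ) (hq : 1 < q) (J : ℕ) :
    ∑ j ∈ Finset.Icc 1 J, q ^ j ≤ q / (q - 1) * q ^ J := by
  have h1 : 0 < q - 1 := by linarith
  induction J with
  | zero => simp; positivity
  | succ J ih =>
    rw [Finset.sum_Icc_succ_top (by omega)]
    have : q / (q - 1) * q ^ (J + 1) = q / (q - 1) * q ^ J + q ^ (J + 1) := by
      field_simp; ring
    linarith

lemma sum_sub_mul_geom_le (q : ℝ) (hq : 1 < q) (J : ℕ) :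
    ∑ j ∈ Finset.Icc 1 J, ((J : ℝ) - j) * q ^ j ≤ q / (q - 1) ^ 2 * q ^ J := by
  have h1 : 0 < q - 1 := by linarith
  induction J with
  | zero => simp; positivity
  | succ J ih =>
    rw [Finset.sum_Icc_succ_top (by omega), sub_self, zero_mul, add_zero]
    have e : ∑ j ∈ Finset.Icc 1 J, (((J + 1 : ℕ) : ℝ) - j) * q ^ j =
        ∑ j ∈ Finset.Icc 1 J, ((J : ℝ) - j) * q ^ j + ∑ j ∈ Finset.Icc 1 J, q ^ j := by
      rw [← Finset.sum_add_distrib]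
      refine Finset.sum_congr rfl fun j _ => ?_
      push_cast; ring
    have : q / (q - 1) ^ 2 * q ^ (J + 1) = q / (q - 1) ^ 2 * q ^ J + q / (q - 1) * q ^ J := by
      field_simp; ring
    have := geom_sum_le q hq J
    linarith

/-- The bracket in the limit equals `log J + O(1)` as soon as `q ^ j * r j` stays between
`q⁻¹` and `q`. -/
lemma bracket_sub_log_bounded (q : ℝ) (hq : 1 < q) (r : ℕ → ℝ)
    (hr : ∀ j, 1 ≤ j → q⁻¹ ≤ q ^ j * r j ∧ q ^ j * r j ≤ q) :
    ∃ C : ℝ, ∀ J : ℕ, 1 ≤ J →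
      |(Real.log ((∑ j ∈ Finset.Icc 1 J, q ^ j * r j) / ∑ j ∈ Finset.Icc 1 J, q ^ j) -
        (∑ j ∈ Finset.Icc 1 J, q ^ j * Real.log (r j)) / ∑ j ∈ Finset.Icc 1 J, q ^ j)
        - Real.log J| ≤ C := by
  have hq0 : 0 < q := by linarith
  have hq1 : 0 < q - 1 := by linarith
  have hL : 0 < Real.log q := Real.log_pos hq
  refine ⟨2 * Real.log q + |Real.log (q / (q - 1))| + q / (q - 1) ^ 2 * Real.log q,
    fun J hJ => ?_⟩
  have hJ0 : (0 : ℝ) < J := by exact_mod_cast hJ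
  set D := ∑ j ∈ Finset.Icc 1 J, q ^ j with hD
  set N := ∑ j ∈ Finset.Icc 1 J, q ^ j * r j with hN
  have hDlow : q ^ J ≤ D := Finset.single_le_sum (f := fun j => q ^ j)
    (fun j _ => by positivity) (Finset.mem_Icc.mpr ⟨hJ, le_rfl⟩)
  have hqJ : 0 < q ^ J := by positivity
  have hD0 : 0 < D := by linarith
  have hDup : D ≤ q / (q - 1) * q ^ J := geom_sum_le q hq J
  have hNlow : J * q⁻¹ ≤ N := by
    have := Finset.card_nsmul_le_sum (Finset.Icc 1 J) (fun j => q ^ j * r j) q⁻¹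
      (fun j hj => (hr j (Finset.mem_Icc.mp hj).1).1)
    simpa using this
  have hNup : N ≤ J * q := by
    have := Finset.sum_le_card_nsmul (Finset.Icc 1 J) (fun j => q ^ j * r j) q
      (fun j hj => (hr j (Finset.mem_Icc.mp hj).1).2)
    simpa using this
  have hN0 : 0 < N := lt_of_lt_of_le (by positivity) hNlow
  have lN1 : Real.log J - Real.log q ≤ Real.log N := by
    have := Real.log_le_log (by positivity) hNlow
    rwa [Real.log_mul hJ0.ne' (by positivity), Real.log_inv, ← sub_eq_add_neg] at this
  have lN2 : Real.log N ≤ Real.log J + Real.log q := by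
    have := Real.log_le_log hN0 hNup
    rwa [Real.log_mul hJ0.ne' hq0.ne'] at this
  have lD1 : J * Real.log q ≤ Real.log D := by
    have := Real.log_le_log hqJ hDlow
    rwa [Real.log_pow] at this
  have lD2 : Real.log D ≤ Real.log (q / (q - 1)) + J * Real.log q := by
    have := Real.log_le_log hD0 hDup
    rwa [Real.log_mul (by positivity) (by positivity), Real.log_pow] at this
  have hlr : ∀ j ∈ Finset.Icc 1 J,
      -Real.log q - j * Real.log q ≤ Real.log (r j) ∧
        Real.log (r j) ≤ Real.log q - j * Real.log q := by
    intro j hj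
    obtain ⟨h1, h2⟩ := hr j (Finset.mem_Icc.mp hj).1
    have hv : 0 < q ^ j * r j := lt_of_lt_of_le (by positivity) h1
    have hrj : 0 < r j := pos_of_mul_pos_right hv (by positivity)
    have e1 := Real.log_le_log (by positivity) h1
    have e2 := Real.log_le_log hv h2
    rw [Real.log_mul (by positivity) hrj.ne', Real.log_pow] at e1 e2
    rw [Real.log_inv] at e1
    constructor <;> linarith
  set E := ∑ j ∈ Finset.Icc 1 J, ((J : ℝ) - j) * q ^ j with hE
  have hE0 : 0 ≤ E := Finset.sum_nonneg fun j hj => by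
    have : (j : ℝ) ≤ J := by exact_mod_cast (Finset.mem_Icc.mp hj).2
    exact mul_nonneg (by linarith) (by positivity)
  have hE1 : E ≤ q / (q - 1) ^ 2 * D :=
    (sum_sub_mul_geom_le q hq J).trans (mul_le_mul_of_nonneg_left hDlow (by positivity))
  have hid : ∀ c : ℝ, ∑ j ∈ Finset.Icc 1 J, q ^ j * (c - j * Real.log q) =
      (c - J * Real.log q) * D + Real.log q * E := by
    intro c
    rw [hD, hE, Finset.mul_sum, Finset.mul_sum, ← Finset.sum_add_distrib]
    exact Finset.sum_congr rfl fun j _ => by ring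
  have hW1 : -Real.log q - J * Real.log q ≤
      (∑ j ∈ Finset.Icc 1 J, q ^ j * Real.log (r j)) / D := by
    rw [le_div_iff₀ hD0]
    have : ∑ j ∈ Finset.Icc 1 J, q ^ j * (-Real.log q - j * Real.log q) ≤
        ∑ j ∈ Finset.Icc 1 J, q ^ j * Real.log (r j) :=
      Finset.sum_le_sum fun j hj => mul_le_mul_of_nonneg_left (hlr j hj).1 (by positivity)
    rw [hid] at this
    have := mul_nonneg hL.le hE0
    linarith
  have hW2 : (∑ j ∈ Finset.Icc 1 J, q ^ j * Real.log (r j)) / D ≤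
      Real.log q - J * Real.log q + q / (q - 1) ^ 2 * Real.log q := by
    rw [div_le_iff₀ hD0]
    have : ∑ j ∈ Finset.Icc 1 J, q ^ j * Real.log (r j) ≤
        ∑ j ∈ Finset.Icc 1 J, q ^ j * (Real.log q - j * Real.log q) :=
      Finset.sum_le_sum fun j hj => mul_le_mul_of_nonneg_left (hlr j hj).2 (by positivity)
    rw [hid] at this
    have := mul_le_mul_of_nonneg_left hE1 hL.le
    linarith
  rw [Real.log_div hN0.ne' hD0.ne', abs_le]
  have ha := le_abs_self (Real.log (q / (q - 1)))
  have ha' := abs_nonneg (Real.log (q / (q - 1)))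
  have hc : 0 ≤ q / (q - 1) ^ 2 * Real.log q := by positivity
  constructor <;> linarith

theorem U_limit_case_eq (B : ℝ) (hB : 1 < B) (b : ℝ → ℝ) (hb : Continuous b)
    (hsupp : Function.support b ⊆ Set.Icc B⁻¹ B)
    (hbpos : ∀ x ∈ Set.Ioo B⁻¹ B, 0 < b x)
    (α α₀ : ℝ) (hdiff : α₀ - α = 2)
    (hK : ∀ j : ℕ, 1 ≤ j → 0 < Kfun B b j α)
    (hK0 : ∀ j : ℕ, 1 ≤ j → 0 < Kfun B b j α₀) :
    Tendsto (fun J : ℕ =>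
      (1 / Real.log (J : ℝ)) *
        (Real.log ((∑ j ∈ Finset.Icc 1 J, B ^ (2 * (j : ℝ)) * (Kfun B b j α₀ / Kfun B b j α)) /
            (∑ j ∈ Finset.Icc 1 J, B ^ (2 * (j : ℝ)))) -
          (∑ j ∈ Finset.Icc 1 J, B ^ (2 * (j : ℝ)) * Real.log (Kfun B b j α₀ / Kfun B b j α)) /
            (∑ j ∈ Finset.Icc 1 J, B ^ (2 * (j : ℝ)))))
      atTop (𝓝 1) := by
  have hB0 : 0 < B := by linarith
  have hpow : ∀ j : ℕ, B ^ (2 * (j : ℝ)) = (B ^ 2) ^ j := by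
    intro j
    rw [← pow_mul, ← Real.rpow_natCast]
    push_cast
    rfl
  simp only [hpow]
  obtain ⟨C, hC⟩ := bracket_sub_log_bounded (B ^ 2) (by nlinarith)
    (fun j => Kfun B b j α₀ / Kfun B b j α)
    (fun j hj => Kfun_ratio_bounds B hB b hsupp α α₀ hdiff j (hK j hj) (hK0 j hj))
  have hlog : Tendsto (fun J : ℕ => Real.log (J : ℝ)) atTop atTop :=
    Real.tendsto_log_atTop.comp tendsto_natCast_atTop_atTop
  have hlim : Tendsto (fun J : ℕ => C / Real.log (J : ℝ)) atTop (𝓝 0) :=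
    hlog.const_div_atTop C
  rw [tendsto_iff_norm_sub_tendsto_zero]
  refine squeeze_zero' (Eventually.of_forall fun _ => norm_nonneg _) ?_ hlim
  filter_upwards [hlog.eventually_gt_atTop 0, eventually_ge_atTop 1] with J hJ hJ1
  have h := hC J hJ1
  rw [Real.norm_eq_abs, le_div_iff₀ hJ]
  nth_rewrite 2 [← abs_of_pos hJ]
  rw [← abs_mul]
  refine le_of_eq_of_le ?_ h
  congr 1
  rw [sub_mul, one_mul, mul_right_comm, one_div_mul_cancel hJ.ne', one_mul]
end
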